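/- There exists r₀ ∈ (0,1) such that U(r₀, π/4) > r₀, where U(r,π/4) = (8/π)·∑_{n=1}^∞ (−1)^{n−1}·r^{(4n−2)²}/(4n−2). Equivalently, there is a point s₀·(1/√2, 1/√2) on the open diagonal of Ω₁ at which u > |∇u|; hence u does not satisfy |∇u| ≥ u throughout Ω₁ and therefore is not a first ∞-eigenfunction (∞-ground state) of the square. -/

import Mathlib

/-!
The violation of `|∇u| ≥ u` is found at the diagonal point `(a, a)`, `a = 0.993`, close to the
corner `(1, 1)`. Write `G θ x y = max_r (r (x cos θ + y sin θ) - W(r, θ))`, so `u = min_θ G θ`.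

* At `r = 1` the series is explicit: `W(1, θ) = cos θ + sin θ - 1` on `[0, π/2]` (`W_one`). The
  relation `W(1, θ + π/2) = -W(1, θ)` then gives `W(1, θ) ≥ cos θ + sin θ - 1` for every real `θ`
  (`W_one_ge`). In `log r` and `θ`, `W` solves a heat equation, so averaging this inequality against
  a Gaussian yields `W(r, θ) ≥ r (cos θ + sin θ) - 1` for `r ∈ [0, 1]` (`W_ge`), that is,
  `G θ 1 1 ≤ 1` for all `θ`.
* `G θ` is convex in `(x, y)`. Comparing `(a, a)` with the corner `(1, 1)` gives a chord bound for
  `u` (`u_chord`), hence `0 ≤ ∂ₓu(a, a) ≤ (1 - u(a, a)) / (2 (1 - a))` (`deriv_u_bounds`). No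
  differentiability is needed, as `deriv` is `0` where the derivative does not exist. By the symmetry
  `u x y = u y x` the other partial derivative is the same number.
* With `δ = √2 (1 - a)` this reads `|∇u| ≤ (1 - u) / δ`, which is smaller than `u` once
  `u(a, a) > 1 / (1 + δ)`. The lower bound `u(a, a) ≥ 0.9902` (`u_lower`) suffices; it is obtained by
  testing the inner maximum with `r = 1` or `r = 0.962`, according to the size of `cos θ + sin θ`.

The inequality `U(r, π/4) > r` at `r = 0.95` is read off the first two terms of the alternating
series (`U_gt`).
-/

open Real Set Topology Filter

/-- `mIdx n = 4(n+1) - 2 = 4n + 2`, the odd-indexed frequencies `2, 6, 10, …`. -/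
def mIdx (n : ℕ) : ℕ := 4 * n + 2

/-- `W(r,θ) = (8/π) ∑_{n≥1} r^{mₙ²} sin(mₙ θ) / ((mₙ² − 1) mₙ)` with `mₙ = 4n − 2`. -/
noncomputable def W (r θ : ℝ) : ℝ :=
  (8 / π) * ∑' n : ℕ,
    r ^ (mIdx n ^ 2) * Real.sin ((mIdx n : ℝ) * θ) / (((mIdx n : ℝ) ^ 2 - 1) * (mIdx n : ℝ))

/-- The minimax formula `u(x,y) = min_{θ∈[0,π/2]} max_{r∈[0,1]} ( r(x cos θ + y sin θ) − W(r,θ) )`.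
(The extrema are attained, so `⨅`/`⨆` over the compact index sets agree with min/max.) -/
noncomputable def u (x y : ℝ) : ℝ :=
  ⨅ θ : Icc (0 : ℝ) (π / 2), ⨆ r : Icc (0 : ℝ) 1,
    ((r : ℝ) * (x * Real.cos (θ : ℝ) + y * Real.sin (θ : ℝ)) - W (r : ℝ) (θ : ℝ))

/-- `U(r,θ) = r W_r − W = (8/π) ∑_{n≥1} r^{mₙ²} sin(mₙθ)/mₙ`. -/
noncomputable def Ufun (r θ : ℝ) : ℝ :=
  (8 / π) * ∑' n : ℕ, r ^ (mIdx n ^ 2) * Real.sin ((mIdx n : ℝ) * θ) / (mIdx n : ℝ)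

/-- The open unit square `Ω₁ = (0,1)²`. -/
def Ω1 : Set (ℝ × ℝ) := (Ioo (0 : ℝ) 1) ×ˢ Ioo (0 : ℝ) 1

/-! ### The series at `θ = π/4` and term estimates -/

theorem mIdx_cast (n : ℕ) : (mIdx n : ℝ) = 4 * n + 2 := by
  simp [mIdx]

theorem sin_mIdx_quarter (n : ℕ) : Real.sin ((mIdx n : ℝ) * (π / 4)) = (-1) ^ n := by
  rw [mIdx_cast, show (4 * (n : ℝ) + 2) * (π / 4) = n * π + π / 2 by ring, Real.sin_add_pi_div_two,
    Real.cos_nat_mul_pi]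

theorem Ufun_quarter (r : ℝ) :
    Ufun r (π / 4) = (8 / π) * ∑' n : ℕ, (-1) ^ n * r ^ (mIdx n ^ 2) / (mIdx n : ℝ) := by
  simp only [Ufun, sin_mIdx_quarter, mul_comm]

/-- The first two terms bound the alternating series from below. -/
theorem U_gt : (19 / 20 : ℝ) <
    (8 / π) * ∑' n : ℕ, (-1) ^ n * (19 / 20 : ℝ) ^ (mIdx n ^ 2) / (mIdx n : ℝ) := by
  have hle : ∀ n : ℕ, n ≤ mIdx n ^ 2 := fun n => by unfold mIdx; nlinarith
  have hs : Summable fun n : ℕ => (-1) ^ n * ((19 / 20 : ℝ) ^ (mIdx n ^ 2) / (mIdx n : ℝ)) := by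
    refine Summable.of_norm_bounded (g := fun n : ℕ => (19 / 20 : ℝ) ^ n)
      (summable_geometric_of_lt_one (by norm_num) (by norm_num)) fun n => ?_
    have h1 : (19 / 20 : ℝ) ^ (mIdx n ^ 2) ≤ (19 / 20 : ℝ) ^ n :=
      pow_le_pow_of_le_one (by norm_num) (by norm_num) (hle n)
    have h2 : (1 : ℝ) ≤ mIdx n := by rw [mIdx_cast]; linarith [n.cast_nonneg (α := ℝ)]
    rw [norm_mul, norm_pow, norm_neg, norm_one, one_pow, one_mul, Real.norm_of_nonneg (by positivity)]
    exact (div_le_self (by positivity) h2).trans h1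
  have ha : Antitone fun n : ℕ => (19 / 20 : ℝ) ^ (mIdx n ^ 2) / (mIdx n : ℝ) := by
    intro i j hij
    have hm : mIdx i ≤ mIdx j := by unfold mIdx; omega
    have h0 : (0 : ℝ) < mIdx i := by rw [mIdx_cast]; positivity
    exact div_le_div₀ (by positivity)
      (pow_le_pow_of_le_one (by norm_num) (by norm_num) (Nat.pow_le_pow_left hm 2)) h0
      (by exact_mod_cast hm)
  have h := ha.alternating_series_le_tendsto hs.hasSum.tendsto_sum_nat 1
  simp only [← mul_div_assoc] at h
  refine lt_of_lt_of_le ?_ (mul_le_mul_of_nonneg_left h (by positivity))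
  have hpi := Real.pi_lt_d4
  have hp := Real.pi_pos
  rw [div_mul_eq_mul_div, lt_div_iff₀ hp]
  norm_num [Finset.sum_range_succ, mIdx]
  linarith

/-- The coefficient of `sin (mₙ θ)` in the series of `W(1, θ)`, up to the factor `8/π`. -/
noncomputable def cf (n : ℕ) : ℝ := 1 / (((mIdx n : ℝ) ^ 2 - 1) * (mIdx n : ℝ))

theorem two_le_mIdx (n : ℕ) : (2 : ℝ) ≤ mIdx n := by
  rw [mIdx_cast]; linarith [n.cast_nonneg (α := ℝ)]

theorem cf_pos (n : ℕ) : 0 < cf n := by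
  have := two_le_mIdx n
  unfold cf
  have : 0 < (mIdx n : ℝ) ^ 2 - 1 := by nlinarith
  positivity

theorem summable_cf : Summable cf := by
  have h := (summable_nat_add_iff 1).2 (Real.summable_one_div_nat_pow.2 (one_lt_two))
  refine Summable.of_nonneg_of_le (fun n => (cf_pos n).le) (fun n => ?_) h
  unfold cf
  have hn := n.cast_nonneg (α := ℝ)
  rw [mIdx_cast]; push_cast
  apply one_div_le_one_div_of_le (by positivity)
  nlinarith [sq_nonneg (n : ℝ), mul_nonneg hn hn, mul_nonneg hn (mul_nonneg hn hn)]

theorem W_eq (r θ : ℝ) :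
    W r θ = (8 / π) * ∑' n : ℕ, r ^ (mIdx n ^ 2) * Real.sin ((mIdx n : ℝ) * θ) * cf n := by
  simp only [W, cf, mul_one_div]

theorem norm_term_le {r : ℝ} (hr : r ∈ Icc (0 : ℝ) 1) (θ : ℝ) (n : ℕ) :
    ‖r ^ (mIdx n ^ 2) * Real.sin ((mIdx n : ℝ) * θ) * cf n‖ ≤ r ^ (mIdx n ^ 2) * cf n := by
  rw [norm_mul, norm_mul, Real.norm_of_nonneg (pow_nonneg hr.1 _),
    Real.norm_of_nonneg (cf_pos n).le]
  have h1 := Real.abs_sin_le_one ((mIdx n : ℝ) * θ)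
  have := cf_pos n
  exact mul_le_mul_of_nonneg_right (mul_le_of_le_one_right (pow_nonneg hr.1 _) h1) this.le

theorem summable_term {r : ℝ} (hr : r ∈ Icc (0 : ℝ) 1) (θ : ℝ) :
    Summable fun n : ℕ => r ^ (mIdx n ^ 2) * Real.sin ((mIdx n : ℝ) * θ) * cf n :=
  Summable.of_norm_bounded summable_cf fun n => (norm_term_le hr θ n).trans
    (mul_le_of_le_one_left (cf_pos n).le (pow_le_one₀ hr.1 hr.2))

/-- The terms of index at least `2` are dominated by a geometric series of ratio `r ^ 96`,
`r = 0.962`. -/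
theorem W_near (θ : ℝ) : W (481 / 500) θ ≤ (8 / π) *
    ((481 / 500 : ℝ) ^ 4 * Real.sin (2 * θ) / 6 + (481 / 500 : ℝ) ^ 36 * Real.sin (6 * θ) / 210
      + 22 / 1000000) := by
  have hr : (481 / 500 : ℝ) ∈ Icc (0 : ℝ) 1 := by constructor <;> norm_num
  have hs := summable_term hr θ
  rw [W_eq, ← hs.sum_add_tsum_nat_add 2]
  refine mul_le_mul_of_nonneg_left ?_ (by positivity)
  have hg : HasSum (fun n : ℕ => (481 / 500 : ℝ) ^ 100 / 990 * ((481 / 500 : ℝ) ^ 96) ^ n)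
      ((481 / 500 : ℝ) ^ 100 / 990 * (1 - (481 / 500 : ℝ) ^ 96)⁻¹) :=
    (hasSum_geometric_of_lt_one (by positivity) (by norm_num)).mul_left _
  have htail := ((summable_nat_add_iff 2).2 hs).tsum_le_tsum (g := fun n : ℕ =>
    (481 / 500 : ℝ) ^ 100 / 990 * ((481 / 500 : ℝ) ^ 96) ^ n) (fun n => by
      refine (le_abs_self _).trans ((norm_term_le hr θ (n + 2)).trans ?_)
      have h1 : (481 / 500 : ℝ) ^ (mIdx (n + 2) ^ 2) ≤ (481 / 500 : ℝ) ^ (100 + 96 * n) :=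
        pow_le_pow_of_le_one (by norm_num) (by norm_num) (by unfold mIdx; nlinarith [Nat.le_mul_self n])
      have h2 : cf (n + 2) ≤ 1 / 990 := by
        unfold cf
        have hn := n.cast_nonneg (α := ℝ)
        rw [mIdx_cast]; push_cast
        apply one_div_le_one_div_of_le (by positivity)
        nlinarith [mul_nonneg hn hn, mul_nonneg hn (mul_nonneg hn hn)]
      calc _ ≤ (481 / 500 : ℝ) ^ (100 + 96 * n) * (1 / 990) := by
            apply mul_le_mul h1 h2 (cf_pos _).le (by positivity)
        _ = _ := by rw [pow_add, pow_mul]; ring) hg.summable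
  rw [hg.tsum_eq] at htail
  have hnum : (481 / 500 : ℝ) ^ 100 / 990 * (1 - (481 / 500 : ℝ) ^ 96)⁻¹ ≤ 22 / 1000000 := by
    norm_num
  have h0 : ∑ n ∈ Finset.range 2,
      (481 / 500 : ℝ) ^ (mIdx n ^ 2) * Real.sin ((mIdx n : ℝ) * θ) * cf n
      = (481 / 500 : ℝ) ^ 4 * Real.sin (2 * θ) / 6 + (481 / 500 : ℝ) ^ 36 * Real.sin (6 * θ) / 210 := by
    simp only [Finset.sum_range_succ, Finset.sum_range_zero, cf, mIdx]
    norm_num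
    ring
  rw [h0]
  linarith

/-! ### The explicit form of `W` at `r = 1` -/

/-- `∑ sin(mₙθ)/mₙ³` from the Fourier series of the Bernoulli polynomial `B₃`, by removing the
even frequencies. -/
theorem hasSum_cubic {θ : ℝ} (hθ : θ ∈ Icc 0 (π / 2)) :
    HasSum (fun n : ℕ => Real.sin ((mIdx n : ℝ) * θ) / (mIdx n : ℝ) ^ 3)
      (π / 8 * (θ * (π / 2 - θ) / 2)) := by
  have hp := Real.pi_pos
  have key : ∀ x ∈ Icc (0 : ℝ) 1, HasSum (fun n : ℕ => 1 / (n : ℝ) ^ 3 * Real.sin (2 * π * n * x))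
      ((2 * π) ^ 3 / 12 * (x ^ 3 - 3 / 2 * x ^ 2 + x / 2)) := by
    intro x hx
    have h := hasSum_one_div_nat_pow_mul_sin (k := 1) one_ne_zero hx
    convert h using 1
    simp [Polynomial.bernoulli, Finset.sum_range_succ, bernoulli_one, Nat.choose, Nat.factorial,
      bernoulli_eq_bernoulli'_of_ne_one, bernoulli'_three]
    ring
  have h1 := key (θ / π) ⟨by have := hθ.1; positivity, by rw [div_le_one hp]; linarith [hθ.2]⟩
  have h2 := key (2 * θ / π) ⟨by have := hθ.1; positivity, by rw [div_le_one hp]; linarith [hθ.2]⟩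
  set f : ℕ → ℝ := fun n => 1 / (n : ℝ) ^ 3 * Real.sin (2 * π * n * (θ / π)) with hf
  have he : HasSum (fun n : ℕ => f (2 * n)) (1 / 8 * ((2 * π) ^ 3 / 12 *
      ((2 * θ / π) ^ 3 - 3 / 2 * (2 * θ / π) ^ 2 + (2 * θ / π) / 2))) := by
    have e : (fun n : ℕ => f (2 * n)) = fun n : ℕ =>
        1 / 8 * (1 / (n : ℝ) ^ 3 * Real.sin (2 * π * n * (2 * θ / π))) := by
      ext n
      simp only [hf]
      push_cast
      rw [show 2 * π * (2 * (n : ℝ)) * (θ / π) = 2 * π * n * (2 * θ / π) by ring, mul_pow]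
      ring
    rw [e]
    exact h2.mul_left (1 / 8)
  have ho : Summable fun n : ℕ => f (2 * n + 1) :=
    h1.summable.comp_injective (i := fun n : ℕ => 2 * n + 1) fun a b hab => by
      have : 2 * a + 1 = 2 * b + 1 := hab
      omega
  have hu := (he.even_add_odd ho.hasSum).unique h1
  have ho' := ho.hasSum.mul_left (1 / 8)
  rw [eq_sub_of_add_eq' hu] at ho'
  have e : (fun n : ℕ => Real.sin ((mIdx n : ℝ) * θ) / (mIdx n : ℝ) ^ 3)
      = fun n : ℕ => 1 / 8 * f (2 * n + 1) := by
    ext n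
    simp only [hf]
    rw [mIdx_cast]
    push_cast
    rw [show 2 * π * (2 * (n : ℝ) + 1) * (θ / π) = (4 * n + 2) * θ by field_simp; ring,
      show (4 * (n : ℝ) + 2) = 2 * (2 * n + 1) by ring, mul_pow]
    field_simp
    norm_num
    ring
  rw [e]
  have e2 : π / 8 * (θ * (π / 2 - θ) / 2) = 1 / 8 *
      ((2 * π) ^ 3 / 12 * ((θ / π) ^ 3 - 3 / 2 * (θ / π) ^ 2 + θ / π / 2) -
        1 / 8 * ((2 * π) ^ 3 / 12 *
          ((2 * θ / π) ^ 3 - 3 / 2 * (2 * θ / π) ^ 2 + 2 * θ / π / 2))) := by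
    field_simp
    ring
  rw [e2]
  exact ho'

/-- On `[0, π/2]` the series at `r = 1` sums to `cos θ + sin θ - 1`. Splitting
`1/((m²-1)m) = 1/m³ + 1/(m³(m²-1))`, the difference `d` of the two sides is differentiable
twice with `d'' = -d`, and it vanishes at both ends. -/
theorem W_one {θ : ℝ} (hθ : θ ∈ Icc 0 (π / 2)) : W 1 θ = Real.cos θ + Real.sin θ - 1 := by
  have hp := Real.pi_pos
  have hm : ∀ n, (0 : ℝ) < mIdx n := fun n => by linarith [two_le_mIdx n]
  let S : ℝ → ℝ := fun t => ∑' n : ℕ, Real.sin ((mIdx n : ℝ) * t) * cf n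
  let k : ℝ → ℝ := fun t => ∑' n : ℕ, Real.sin ((mIdx n : ℝ) * t) * (cf n / (mIdx n : ℝ) ^ 2)
  let k' : ℝ → ℝ := fun t => ∑' n : ℕ, Real.cos ((mIdx n : ℝ) * t) * (cf n / (mIdx n : ℝ))
  have hk : ∀ t, HasDerivAt k (k' t) t := fun t => by
    refine hasDerivAt_tsum summable_cf (y₀ := 0)
      (g := fun n t => Real.sin ((mIdx n : ℝ) * t) * (cf n / (mIdx n : ℝ) ^ 2))
      (g' := fun n t => Real.cos ((mIdx n : ℝ) * t) * (cf n / (mIdx n : ℝ)))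
      (fun n y => ?_) (fun n y => ?_) ?_ t
    · have h := ((hasDerivAt_id y).const_mul (mIdx n : ℝ)).sin.mul_const (cf n / (mIdx n : ℝ) ^ 2)
      refine h.congr_deriv ?_
      have := (hm n).ne'
      simp only [id]
      field_simp
    · have h1 := Real.abs_cos_le_one ((mIdx n : ℝ) * y)
      have h2 : cf n / (mIdx n : ℝ) ≤ cf n :=
        div_le_self (cf_pos n).le (by linarith [two_le_mIdx n])
      have h3 : 0 ≤ cf n / (mIdx n : ℝ) := div_nonneg (cf_pos n).le (hm n).le
      rw [norm_mul, Real.norm_of_nonneg h3]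
      exact (mul_le_of_le_one_left h3 h1).trans h2
    · simp
  have hk' : ∀ t, HasDerivAt k' (-S t) t := fun t => by
    have := hasDerivAt_tsum summable_cf (y₀ := 0)
      (g := fun n t => Real.cos ((mIdx n : ℝ) * t) * (cf n / (mIdx n : ℝ)))
      (g' := fun n t => -(Real.sin ((mIdx n : ℝ) * t) * cf n))
      (fun n y => by
        have h := ((hasDerivAt_id y).const_mul (mIdx n : ℝ)).cos.mul_const (cf n / (mIdx n : ℝ))
        refine h.congr_deriv ?_
        have := (hm n).ne'
        simp only [id]
        field_simp) (fun n y => by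
        have h1 := Real.abs_sin_le_one ((mIdx n : ℝ) * y)
        rw [norm_neg, norm_mul, Real.norm_of_nonneg (cf_pos n).le]
        exact mul_le_of_le_one_left (cf_pos n).le h1) (by
        refine Summable.of_nonneg_of_le (fun n => ?_) (fun n => ?_) summable_cf
        · have := cf_pos n
          have := hm n
          simp only [mul_zero, Real.cos_zero, one_mul]
          positivity
        · simp only [mul_zero, Real.cos_zero, one_mul]
          exact div_le_self (cf_pos n).le (by linarith [two_le_mIdx n])) t
    rwa [tsum_neg] at this
  have hSk : ∀ t ∈ Icc 0 (π / 2), S t = k t + π / 8 * (t * (π / 2 - t) / 2) := by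
    intro t ht
    have h1 := hasSum_cubic ht
    have h2 : Summable fun n : ℕ => Real.sin ((mIdx n : ℝ) * t) * cf n := by
      simpa using summable_term (r := 1) ⟨zero_le_one, le_rfl⟩ t
    have e : (fun n : ℕ => Real.sin ((mIdx n : ℝ) * t) * (cf n / (mIdx n : ℝ) ^ 2)) =
        fun n : ℕ => Real.sin ((mIdx n : ℝ) * t) * cf n
          - Real.sin ((mIdx n : ℝ) * t) / (mIdx n : ℝ) ^ 3 := by
      ext n
      have h0 := hm n
      have h3 : (0 : ℝ) < (mIdx n : ℝ) ^ 2 - 1 := by nlinarith [two_le_mIdx n]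
      unfold cf
      field_simp
      ring
    have h4 : k t = S t - π / 8 * (t * (π / 2 - t) / 2) := by
      simp only [k, S]
      rw [e, h2.tsum_sub h1.summable, h1.tsum_eq]
    linarith
  have hWS : W 1 θ = 8 / π * S θ := by
    rw [W_eq]; simp [S]
  let d : ℝ → ℝ := fun t => 8 / π * k t + t * (π / 2 - t) / 2 - (Real.cos t + Real.sin t - 1)
  let d' : ℝ → ℝ := fun t => 8 / π * k' t + (π / 2 - 2 * t) / 2 - (Real.cos t - Real.sin t)
  have hdS : ∀ t ∈ Icc 0 (π / 2), d t = 8 / π * S t - (Real.cos t + Real.sin t - 1) := by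
    intro t ht
    rw [hSk t ht]
    simp only [d]
    field_simp
  have hd : ∀ t, HasDerivAt d (d' t) t := fun t => by
    have h1 := ((hasDerivAt_id t).mul ((hasDerivAt_id t).const_sub (π / 2))).div_const 2
    have h := (((hk t).const_mul (8 / π)).add h1).sub
      (((Real.hasDerivAt_cos t).add (Real.hasDerivAt_sin t)).sub_const 1)
    refine h.congr_deriv ?_
    simp only [d', id]
    ring
  have hd' : ∀ t ∈ Icc 0 (π / 2), HasDerivAt d' (-d t) t := fun t ht => by
    have h1 := (((hasDerivAt_id t).const_mul 2).const_sub (π / 2)).div_const 2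
    have h := (((hk' t).const_mul (8 / π)).add h1).sub
      ((Real.hasDerivAt_cos t).sub (Real.hasDerivAt_sin t))
    refine h.congr_deriv ?_
    rw [hdS t ht]
    ring
  -- `(P, Q)` is the pair `(d, d')` rotated by the angle `t`; both are constants of the motion.
  let P : ℝ → ℝ := fun t => d t * Real.sin t + d' t * Real.cos t
  let Q : ℝ → ℝ := fun t => d t * Real.cos t - d' t * Real.sin t
  have hP : ∀ t ∈ Icc 0 (π / 2), HasDerivAt P 0 t := fun t ht => by
    have h := ((hd t).mul (Real.hasDerivAt_sin t)).add ((hd' t ht).mul (Real.hasDerivAt_cos t))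
    exact h.congr_deriv (by ring)
  have hQ : ∀ t ∈ Icc 0 (π / 2), HasDerivAt Q 0 t := fun t ht => by
    have h := ((hd t).mul (Real.hasDerivAt_cos t)).sub ((hd' t ht).mul (Real.hasDerivAt_sin t))
    exact h.congr_deriv (by ring)
  have cP := constant_of_has_deriv_right_zero
    (fun t ht => (hP t ht).continuousAt.continuousWithinAt)
    (fun t ht => (hP t (Ico_subset_Icc_self ht)).hasDerivWithinAt)
  have cQ := constant_of_has_deriv_right_zero
    (fun t ht => (hQ t ht).continuousAt.continuousWithinAt)
    (fun t ht => (hQ t (Ico_subset_Icc_self ht)).hasDerivWithinAt)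
  have hz : (0 : ℝ) ∈ Icc 0 (π / 2) := ⟨le_rfl, by positivity⟩
  have hr : π / 2 ∈ Icc 0 (π / 2) := ⟨by positivity, le_rfl⟩
  have d0 : d 0 = 0 := by rw [hdS 0 hz]; simp [S]
  have d1 : d (π / 2) = 0 := by
    rw [hdS _ hr]
    have : S (π / 2) = 0 := by
      have e : ∀ n : ℕ, Real.sin ((mIdx n : ℝ) * (π / 2)) = 0 := fun n => by
        rw [mIdx_cast, show (4 * (n : ℝ) + 2) * (π / 2) = (2 * n + 1 : ℕ) * π by push_cast; ring,
          Real.sin_nat_mul_pi]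
      simp [S, e]
    simp [this]
  have Qθ : Q θ = 0 := by rw [cQ θ hθ]; simp [Q, d0]
  have Pθ : P θ = 0 := by rw [cP θ hθ, ← cP _ hr]; simp [P, d1]
  have hd0 : d θ = 0 := by
    have h : d θ = P θ * Real.sin θ + Q θ * Real.cos θ := by
      simp only [P, Q]
      linear_combination (-d θ) * Real.sin_sq_add_cos_sq θ
    rw [h, Pθ, Qθ]; ring
  rw [hWS]
  linarith [hdS θ hθ]

theorem W_add_half_pi (r θ : ℝ) : W r (θ + π / 2) = -W r θ := by
  rw [W_eq, W_eq, ← mul_neg, ← tsum_neg]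
  congr 2
  ext n
  rw [mIdx_cast, show (4 * (n : ℝ) + 2) * (θ + π / 2)
    = (4 * n + 2) * θ + π + n * (2 * π) by ring, Real.sin_add_nat_mul_two_pi, Real.sin_add_pi]
  ring

theorem W_half_pi_sub (r θ : ℝ) : W r (π / 2 - θ) = W r θ := by
  rw [W_eq, W_eq]
  congr 2
  ext n
  rw [mIdx_cast, show (4 * (n : ℝ) + 2) * (π / 2 - θ)
    = π - (4 * n + 2) * θ + n * (2 * π) by ring, Real.sin_add_nat_mul_two_pi, Real.sin_pi_sub]

/-- The formula for `W(1, ·)` on `[0, π/2]`, continued by `W(1, θ + π/2) = -W(1, θ)`, gives a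
lower bound on the whole line. -/
theorem W_one_ge (θ : ℝ) : Real.cos θ + Real.sin θ - 1 ≤ W 1 θ := by
  have hp := Real.pi_pos
  have hmain : ∀ t ∈ Ico 0 (2 * π), Real.cos t + Real.sin t - 1 ≤ W 1 t := by
    intro t ht
    have base : ∀ s ∈ Icc 0 (π / 2), 0 ≤ Real.sin s ∧ 0 ≤ Real.cos s := fun s hs =>
      ⟨Real.sin_nonneg_of_nonneg_of_le_pi hs.1 (by linarith [hs.2]),
        Real.cos_nonneg_of_neg_pi_div_two_le_of_le (by linarith [hs.1]) hs.2⟩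
    rcases le_total t (π / 2) with h1 | h1
    · exact (W_one ⟨ht.1, h1⟩).ge
    obtain ⟨s, rfl⟩ : ∃ s, t = s + π / 2 := ⟨t - π / 2, by ring⟩
    rw [W_add_half_pi, Real.cos_add_pi_div_two, Real.sin_add_pi_div_two]
    rcases le_total s (π / 2) with h2 | h2
    · have hs : s ∈ Icc 0 (π / 2) := ⟨by linarith, h2⟩
      rw [W_one hs]
      linarith [Real.cos_le_one s]
    obtain ⟨s, rfl⟩ : ∃ t, s = t + π / 2 := ⟨s - π / 2, by ring⟩
    rw [W_add_half_pi, Real.cos_add_pi_div_two, Real.sin_add_pi_div_two]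
    rcases le_total s (π / 2) with h3 | h3
    · have hs : s ∈ Icc 0 (π / 2) := ⟨by linarith, h3⟩
      rw [W_one hs]
      linarith [base s hs]
    obtain ⟨s, rfl⟩ : ∃ t, s = t + π / 2 := ⟨s - π / 2, by ring⟩
    have hs : s ∈ Icc 0 (π / 2) := ⟨by linarith, by linarith [ht.2]⟩
    rw [W_add_half_pi, Real.cos_add_pi_div_two, Real.sin_add_pi_div_two, W_one hs]
    linarith [Real.sin_le_one s]
  have hper : Function.Periodic (fun t => W 1 t - (Real.cos t + Real.sin t - 1)) (2 * π) := by
    intro t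
    have h4 : W 1 (t + 2 * π) = W 1 t := by
      rw [show t + 2 * π = t + π / 2 + π / 2 + π / 2 + π / 2 by ring]
      simp only [W_add_half_pi, neg_neg]
    simp only [h4, Real.cos_add_two_pi, Real.sin_add_two_pi]
  obtain ⟨t, ht, h⟩ := hper.exists_mem_Ico₀ (by positivity) θ
  have h' : W 1 θ - (Real.cos θ + Real.sin θ - 1) = W 1 t - (Real.cos t + Real.sin t - 1) := h
  linarith [hmain t ht]

/-! ### Gaussian averaging -/

open MeasureTheory ProbabilityTheory in
/-- Averaging a sine of frequency `m` against a centred Gaussian of variance `v` multiplies it by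
`exp (-v m² / 2)`. -/
theorem gauss_sin (v : NNReal) (m θ : ℝ) :
    ∫ z, Real.sin (m * (θ + z)) ∂gaussianReal 0 v = Real.exp (-(v * m ^ 2 / 2)) * Real.sin (m * θ) := by
  have h := charFun_gaussianReal (μ := 0) (v := v) m
  rw [charFun_apply_real] at h
  have hexp : Integrable (fun z : ℝ => Complex.exp (Complex.I * (m * θ)) * Complex.exp (m * z * Complex.I))
      (gaussianReal 0 v) := by
    refine Integrable.of_bound (by fun_prop) 1 (ae_of_all _ fun z => ?_)
    rw [norm_mul, ← Complex.ofReal_mul, ← Complex.ofReal_mul, Complex.norm_exp_ofReal_mul_I,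
      Complex.norm_exp_I_mul_ofReal]
    norm_num
  have e : ∀ z : ℝ, Real.sin (m * (θ + z)) = RCLike.im
      (Complex.exp (Complex.I * (m * θ)) * Complex.exp (m * z * Complex.I)) := fun z => by
    rw [← Complex.exp_add, show Complex.I * (m * θ) + m * z * Complex.I
      = ((m * (θ + z) : ℝ) : ℂ) * Complex.I by push_cast; ring]
    exact (Complex.exp_ofReal_mul_I_im _).symm
  simp_rw [e]
  rw [integral_im hexp, integral_const_mul, h, ← Complex.exp_add,
    show Complex.I * (m * θ) + (m * ((0 : ℝ) : ℂ) * Complex.I - v * m ^ 2 / 2)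
      = ((-(v * m ^ 2 / 2) : ℝ) : ℂ) + ((m * θ : ℝ) : ℂ) * Complex.I by push_cast; ring,
    Complex.exp_add, ← Complex.ofReal_exp]
  change (_ : ℂ).im = _
  rw [Complex.im_ofReal_mul, Complex.exp_ofReal_mul_I_im]

theorem W_zero (θ : ℝ) : W 0 θ = 0 := by
  have h : ∀ n, (0 : ℝ) ^ (mIdx n ^ 2) = 0 := fun n => zero_pow (by unfold mIdx; positivity)
  rw [W_eq]
  simp [h]

theorem continuous_W_one : Continuous (W 1) := by
  have h : W 1 = fun θ => (8 / π) * ∑' n : ℕ, Real.sin ((mIdx n : ℝ) * θ) * cf n := by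
    ext θ; rw [W_eq]; simp
  rw [h]
  refine continuous_const.mul (continuous_tsum (fun n => by fun_prop) summable_cf fun n x => ?_)
  simpa using norm_term_le (r := 1) ⟨zero_le_one, le_rfl⟩ x n

open MeasureTheory ProbabilityTheory in
/-- The inequality `W(1, ·) ≥ cos + sin - 1` on the line propagates to every `r`, since `W(r, ·)`
and `r (cos + sin) - 1` are the averages of the two sides against the same Gaussian. -/
theorem W_ge {r : ℝ} (hr : r ∈ Icc (0 : ℝ) 1) (θ : ℝ) :
    r * (Real.cos θ + Real.sin θ) - 1 ≤ W r θ := by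
  rcases hr.1.eq_or_lt with h0 | h0
  · rw [← h0, W_zero]; simp
  have hlog : 0 ≤ -2 * Real.log r := by nlinarith [Real.log_nonpos hr.1 hr.2]
  obtain ⟨v, hv⟩ : ∃ v : NNReal, (v : ℝ) = -2 * Real.log r := ⟨⟨_, hlog⟩, rfl⟩
  have hpow : ∀ m : ℕ, Real.exp (-(v * (m : ℝ) ^ 2 / 2)) = r ^ (m ^ 2) := fun m => by
    rw [hv, ← Real.exp_log (pow_pos h0 _), Real.log_pow]
    congr 1
    push_cast
    ring
  set μ := gaussianReal 0 v
  have hsin1 : ∀ m t : ℝ, Integrable (fun z => Real.sin (m * (t + z))) μ := fun m t =>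
    Integrable.of_bound (by fun_prop) 1 (ae_of_all _ fun z => Real.abs_sin_le_one _)
  have h1 := gauss_sin v 1 θ
  have h2 := gauss_sin v 1 (θ + π / 2)
  have hr1 : Real.exp (-(v * (1 : ℝ) ^ 2 / 2)) = r := by simpa using hpow 1
  rw [hr1] at h1 h2
  have i1 := hsin1 1 θ
  have i2 := hsin1 1 (θ + π / 2)
  have hcos : ∀ z, Real.sin (θ + π / 2 + z) = Real.cos (θ + z) := fun z => by
    rw [show θ + π / 2 + z = θ + z + π / 2 by ring, Real.sin_add_pi_div_two]
  simp only [hcos, one_mul, Real.sin_add_pi_div_two] at h1 h2 i1 i2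
  have hleft : ∫ z, (Real.cos (θ + z) + Real.sin (θ + z) - 1) ∂μ
      = r * (Real.cos θ + Real.sin θ) - 1 := by
    rw [integral_sub (f := fun z => Real.cos (θ + z) + Real.sin (θ + z)) (i2.add i1)
      (integrable_const 1), integral_add i2 i1, h1, h2]
    simp
    ring
  have hterm : ∀ n : ℕ, Integrable (fun z => Real.sin ((mIdx n : ℝ) * (θ + z)) * cf n) μ :=
    fun n => (hsin1 _ _).mul_const _
  have hbd : ∀ (n : ℕ) (z : ℝ), ‖Real.sin ((mIdx n : ℝ) * (θ + z)) * cf n‖ ≤ cf n := fun n z => by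
    simpa using norm_term_le (r := 1) ⟨zero_le_one, le_rfl⟩ (θ + z) n
  have hsum : Summable fun n : ℕ => ∫ z, ‖Real.sin ((mIdx n : ℝ) * (θ + z)) * cf n‖ ∂μ := by
    refine Summable.of_nonneg_of_le (fun n => integral_nonneg fun z => norm_nonneg _)
      (fun n => ?_) summable_cf
    calc _ ≤ ∫ z, cf n ∂μ := integral_mono (hterm n).norm (integrable_const _) (hbd n)
      _ = cf n := by simp
  have hI := hasSum_integral_of_summable_integral_norm hterm hsum
  have hW1 : ∀ z, W 1 (θ + z) = (8 / π) * ∑' n : ℕ, Real.sin ((mIdx n : ℝ) * (θ + z)) * cf n :=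
    fun z => by rw [W_eq]; simp
  have hright : ∫ z, W 1 (θ + z) ∂μ = W r θ := by
    simp_rw [hW1]
    rw [integral_const_mul, ← hI.tsum_eq, W_eq]
    congr 2
    ext n
    rw [integral_mul_const, gauss_sin, hpow]
  have hWint : Integrable (fun z => W 1 (θ + z)) μ := by
    refine Integrable.of_bound (by
      have := continuous_W_one
      exact (this.comp (continuous_const.add continuous_id)).aestronglyMeasurable)
      (8 / π * ∑' n, cf n) (ae_of_all _ fun z => ?_)
    rw [hW1, norm_mul, Real.norm_of_nonneg (by positivity)]
    exact mul_le_mul_of_nonneg_left (tsum_of_norm_bounded summable_cf.hasSum fun n => hbd n z)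
      (by positivity)
  rw [← hleft, ← hright]
  have hcs : Integrable (fun z => Real.cos (θ + z) + Real.sin (θ + z) - 1) μ :=
    (i2.add i1).sub (integrable_const 1)
  exact integral_mono hcs hWint fun z => W_one_ge (θ + z)

/-! ### The minimax function `u` -/

/-- The inner maximum `max_r (r (x cos θ + y sin θ) - W(r, θ))`, so that `u = min_θ G θ`. -/
noncomputable def G (θ x y : ℝ) : ℝ :=
  ⨆ r : Icc (0 : ℝ) 1,
    ((r : ℝ) * (x * Real.cos θ + y * Real.sin θ) - W (r : ℝ) θ)

theorem u_eq (x y : ℝ) : u x y = ⨅ θ : Icc (0 : ℝ) (π / 2), G θ x y := rfl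

theorem trig_nonneg {θ : ℝ} (hθ : θ ∈ Icc 0 (π / 2)) : 0 ≤ Real.sin θ ∧ 0 ≤ Real.cos θ :=
  ⟨Real.sin_nonneg_of_nonneg_of_le_pi hθ.1 (by linarith [hθ.2, Real.pi_pos]),
    Real.cos_nonneg_of_neg_pi_div_two_le_of_le (by linarith [hθ.1, Real.pi_pos]) hθ.2⟩

theorem G_bdd (θ x y : ℝ) : BddAbove (range fun r : Icc (0 : ℝ) 1 =>
    ((r : ℝ) * (x * Real.cos θ + y * Real.sin θ) - W (r : ℝ) θ)) := by
  refine ⟨1 + |(x - 1) * Real.cos θ + (y - 1) * Real.sin θ|, ?_⟩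
  rintro _ ⟨⟨r, hr⟩, rfl⟩
  have h1 := W_ge hr θ
  have h2 : r * ((x - 1) * Real.cos θ + (y - 1) * Real.sin θ) ≤
      |(x - 1) * Real.cos θ + (y - 1) * Real.sin θ| :=
    (mul_le_mul_of_nonneg_left (le_abs_self _) hr.1).trans
      (mul_le_of_le_one_left (abs_nonneg _) hr.2)
  simp only
  linarith

theorem le_G {r : ℝ} (hr : r ∈ Icc (0 : ℝ) 1) (θ x y : ℝ) :
    r * (x * Real.cos θ + y * Real.sin θ) - W r θ ≤ G θ x y :=
  le_ciSup (G_bdd θ x y) (⟨r, hr⟩ : Icc (0 : ℝ) 1)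

theorem G_nonneg (θ x y : ℝ) : 0 ≤ G θ x y := by
  have h := le_G (r := 0) ⟨le_rfl, zero_le_one⟩ θ x y
  rw [W_zero] at h
  simpa using h

theorem u_bdd (x y : ℝ) : BddBelow (range fun θ : Icc (0 : ℝ) (π / 2) => G θ x y) :=
  ⟨0, by rintro _ ⟨θ, rfl⟩; exact G_nonneg _ _ _⟩

theorem u_le {θ : ℝ} (hθ : θ ∈ Icc 0 (π / 2)) (x y : ℝ) : u x y ≤ G θ x y :=
  ciInf_le (u_bdd x y) (⟨θ, hθ⟩ : Icc (0 : ℝ) (π / 2))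

theorem le_u {c x y : ℝ} (h : ∀ θ ∈ Icc 0 (π / 2), c ≤ G θ x y) : c ≤ u x y := by
  have : Nonempty (Icc (0 : ℝ) (π / 2)) := ⟨⟨0, le_rfl, by positivity⟩⟩
  exact le_ciInf fun θ => h θ θ.2

theorem G_reflect (θ x y : ℝ) : G (π / 2 - θ) x y = G θ y x := by
  unfold G
  simp only [Real.cos_pi_div_two_sub, Real.sin_pi_div_two_sub, W_half_pi_sub]
  congr 1
  ext r
  ring

theorem reflect_mem {θ : ℝ} (hθ : θ ∈ Icc 0 (π / 2)) : π / 2 - θ ∈ Icc 0 (π / 2) :=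
  ⟨by linarith [hθ.2], by linarith [hθ.1]⟩

theorem u_symm (x y : ℝ) : u x y = u y x := by
  have h : ∀ x y, u x y ≤ u y x := fun x y => le_u fun θ hθ => by
    rw [← G_reflect]
    exact u_le (reflect_mem hθ) x y
  exact le_antisymm (h x y) (h y x)

theorem u_mono {x x' : ℝ} (hx : x ≤ x') (y : ℝ) : u x y ≤ u x' y := by
  refine le_u fun θ hθ => (u_le hθ x y).trans ?_
  have : Nonempty (Icc (0 : ℝ) 1) := ⟨⟨0, le_rfl, zero_le_one⟩⟩
  refine ciSup_le fun r => (le_trans ?_ (le_G r.2 θ x' y))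
  have h := mul_le_mul_of_nonneg_left
    (mul_le_mul_of_nonneg_right hx (trig_nonneg hθ).2) r.2.1
  linarith

/-- A chord bound for `u` to the right of a diagonal point. For directions with `cos θ ≤ sin θ`
the inner maximum is convex, and moving `2 (1 - a)` in the first coordinate costs no more than
moving to the corner `(1, 1)`, where the inner maximum is at most `1`. The reflection
`θ ↦ π/2 - θ` makes those directions sufficient on the diagonal. -/
theorem u_chord {a t : ℝ} (ha : a ≤ 1) (ht : t ∈ Ico (0 : ℝ) 1) :
    u (a + 2 * (1 - a) * t) a ≤ (1 - t) * u a a + t := by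
  have key : ∀ θ ∈ Icc 0 (π / 2), Real.cos θ ≤ Real.sin θ →
      u (a + 2 * (1 - a) * t) a ≤ (1 - t) * G θ a a + t := by
    intro θ hθ hcs
    refine (u_le hθ _ _).trans ?_
    have : Nonempty (Icc (0 : ℝ) 1) := ⟨⟨0, le_rfl, zero_le_one⟩⟩
    refine ciSup_le fun r => ?_
    have h1 := mul_le_mul_of_nonneg_left (le_G r.2 θ a a) (sub_nonneg.2 ht.2.le)
    have h2 := mul_le_mul_of_nonneg_left (W_ge r.2 θ) ht.1
    have h3 : 0 ≤ t * ((1 - a) * (r * (Real.sin θ - Real.cos θ))) :=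
      mul_nonneg ht.1 (mul_nonneg (sub_nonneg.2 ha) (mul_nonneg r.2.1 (sub_nonneg.2 hcs)))
    nlinarith
  have h1t : 0 < 1 - t := by linarith [ht.2]
  have hle : (u (a + 2 * (1 - a) * t) a - t) / (1 - t) ≤ u a a := by
    refine le_u fun θ hθ => ?_
    rw [div_le_iff₀ h1t]
    rcases le_total (Real.cos θ) (Real.sin θ) with h | h
    · linarith [key θ hθ h]
    · have := key _ (reflect_mem hθ) (by
        rwa [Real.cos_pi_div_two_sub, Real.sin_pi_div_two_sub])
      rw [G_reflect] at this
      linarith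
  rw [div_le_iff₀ h1t] at hle
  linarith

/-- Monotonicity and the chord bound `u_chord` control the partial derivative. At a point of
non-differentiability `deriv` is `0` and both inequalities hold trivially. -/
theorem deriv_u_bounds {a : ℝ} (ha : a < 1) (hu : u a a ≤ 1) :
    0 ≤ deriv (fun s => u s a) a ∧
      deriv (fun s => u s a) a * (2 * (1 - a)) ≤ 1 - u a a := by
  by_cases hd : DifferentiableAt ℝ (fun s => u s a) a
  · have hmono : Monotone fun s => u s a := fun x x' h => u_mono h a
    have hH : 0 < 2 * (1 - a) := by linarith
    refine ⟨hmono.deriv_nonneg, ?_⟩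
    rw [← le_div_iff₀ hH]
    refine le_of_tendsto hd.hasDerivAt.tendsto_slope_zero_right ?_
    filter_upwards [Ioo_mem_nhdsGT hH] with h hh
    have hc := u_chord (t := h / (2 * (1 - a))) ha.le
      ⟨div_nonneg hh.1.le hH.le, (div_lt_one hH).2 hh.2⟩
    rw [mul_div_cancel₀ _ hH.ne'] at hc
    rw [smul_eq_mul, inv_mul_le_iff₀ hh.1, mul_div_assoc']
    have e : (1 - h / (2 * (1 - a))) * u a a + h / (2 * (1 - a))
        = u a a + h * (1 - u a a) / (2 * (1 - a)) := by
      field_simp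
      ring
    linarith
  · rw [deriv_zero_of_not_differentiableAt hd]
    exact ⟨le_rfl, by linarith⟩

theorem u_diag_le_one {a : ℝ} (ha : a ≤ 1) : u a a ≤ 1 := by
  have hz : (0 : ℝ) ∈ Icc 0 (π / 2) := ⟨le_rfl, by positivity⟩
  refine (u_le hz a a).trans ?_
  have : Nonempty (Icc (0 : ℝ) 1) := ⟨⟨0, le_rfl, zero_le_one⟩⟩
  refine ciSup_le fun r => ?_
  have h1 := W_ge r.2 0
  have h2 := mul_le_mul_of_nonneg_left ha r.2.1
  simp only [Real.cos_zero, Real.sin_zero] at h1 ⊢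
  linarith

/-- Lower bound for `u` at `(a, a)`, `a = 0.993`. For `y = cos θ + sin θ ≤ 1.4` the choice `r = 1`
is enough; for larger `y` the near-optimal radius `r = 0.962` is used. -/
theorem u_lower : (4951 / 5000 : ℝ) ≤ u (993 / 1000) (993 / 1000) := by
  refine le_u fun θ hθ => ?_
  obtain ⟨hs, hc⟩ := trig_nonneg hθ
  obtain ⟨y, hy⟩ : ∃ y, y = Real.cos θ + Real.sin θ := ⟨_, rfl⟩
  rcases le_total y (7 / 5) with h | h
  · refine le_trans ?_ (le_G (r := 1) ⟨zero_le_one, le_rfl⟩ θ _ _)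
    rw [W_one hθ]
    linarith
  refine le_trans ?_ (le_G (r := 481 / 500) ⟨by norm_num, by norm_num⟩ θ _ _)
  have hsq := Real.sin_sq_add_cos_sq θ
  have h2 : Real.sin (2 * θ) = y ^ 2 - 1 := by
    rw [Real.sin_two_mul, hy]; linear_combination (-1 : ℝ) * hsq
  obtain ⟨e, he⟩ : ∃ e, e = 2 - y ^ 2 := ⟨_, rfl⟩
  have h6 : Real.sin (6 * θ) = -(1 - 9 * e + 12 * e ^ 2 - 4 * e ^ 3) := by
    rw [show 6 * θ = 3 * (2 * θ) by ring, Real.sin_three_mul, h2, he]; ring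
  have hW := W_near θ
  have he0 : 0 ≤ e := by
    have := Real.sin_le_one (2 * θ)
    linarith
  have he1 : e ≤ 1 / 25 := by nlinarith
  have hy2 : y ≤ 14143 / 10000 := by nlinarith
  have hB : (2478 / 10000 : ℝ) ≤ (481 / 500 : ℝ) ^ 36 := by norm_num
  have hA : (481 / 500 : ℝ) ^ 4 ≤ 85646 / 100000 := by norm_num
  -- `12 e² - 4 e³ ≥ 11.84 e²` because `e ≤ 1/25`
  have hbr : (481 / 500 : ℝ) ^ 4 * Real.sin (2 * θ) / 6
      + (481 / 500 : ℝ) ^ 36 * Real.sin (6 * θ) / 210 + 22 / 1000000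
      ≤ 85646 / 600000 * (1 - e) - 2478 / 2100000 * (1 - 9 * e + 1184 / 100 * e ^ 2)
        + 22 / 1000000 := by
    rw [h6, h2]
    have e1 : y ^ 2 - 1 = 1 - e := by rw [he]; ring
    rw [e1]
    have k1 := mul_le_mul_of_nonneg_right hA (by linarith : 0 ≤ 1 - e)
    have k2 : 1 - 9 * e + 1184 / 100 * e ^ 2 ≤ 1 - 9 * e + 12 * e ^ 2 - 4 * e ^ 3 := by
      nlinarith [mul_nonneg (sq_nonneg e) (sub_nonneg.2 he1)]
    have k3 : 0 ≤ 1 - 9 * e + 1184 / 100 * e ^ 2 := by nlinarith [sq_nonneg e]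
    have k4 := mul_le_mul hB k2 k3 (by positivity)
    linarith
  have hbr0 : 0 ≤ 85646 / 600000 * (1 - e) - 2478 / 2100000 * (1 - 9 * e + 1184 / 100 * e ^ 2)
        + 22 / 1000000 := by nlinarith
  have hpi : 8 / π ≤ 254649 / 100000 := by
    rw [div_le_iff₀ Real.pi_pos]
    linarith [Real.pi_gt_d6]
  have hW2 := hW.trans ((mul_le_mul_of_nonneg_left hbr (by positivity)).trans
    (mul_le_mul_of_nonneg_right hpi hbr0))
  have hlin : (481 / 500 : ℝ) * (993 / 1000 * Real.cos θ + 993 / 1000 * Real.sin θ)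
      = 477633 / 500000 * y := by rw [hy]; ring
  rw [hlin]
  rw [he] at hW2
  -- the resulting lower bound is concave in `y` on `[1.4, 1.4143]`, with values above `0.9902` at
  -- the endpoints
  have hq := mul_nonneg (sub_nonneg.2 h) (sub_nonneg.2 hy2)
  nlinarith [mul_nonneg hq (sq_nonneg y), mul_nonneg hq (by linarith : 0 ≤ y), sq_nonneg (y ^ 2 - 2)]

/-- there is `r₀ ∈ (0,1)` with `U(r₀,π/4) > r₀`; equivalently there is a point
on the open diagonal of `Ω₁` where `u > |∇u|`; hence `|∇u| ≥ u` fails in `Ω₁` and `u` is not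
an `∞`-ground state of the square. -/
theorem stmt19 :
    (∃ r₀ ∈ Ioo (0 : ℝ) 1, r₀ < Ufun r₀ (π / 4)) ∧
    (∃ r₀ ∈ Ioo (0 : ℝ) 1,
      r₀ < (8 / π) * ∑' n : ℕ, (-1) ^ n * r₀ ^ (mIdx n ^ 2) / (mIdx n : ℝ)) ∧
    (∃ x : ℝ × ℝ, x ∈ Ω1 ∧ x.1 = x.2 ∧
      Real.sqrt ((deriv (fun s => u s x.2) x.1) ^ 2 + (deriv (fun t => u x.1 t) x.2) ^ 2)
        < u x.1 x.2) ∧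
    ¬ (∀ x ∈ Ω1, u x.1 x.2 ≤
        Real.sqrt ((deriv (fun s => u s x.2) x.1) ^ 2 + (deriv (fun t => u x.1 t) x.2) ^ 2)) := by
  have hcounter : Real.sqrt ((deriv (fun s => u s (993 / 1000)) (993 / 1000)) ^ 2 +
      (deriv (fun t => u (993 / 1000) t) (993 / 1000)) ^ 2) < u (993 / 1000) (993 / 1000) := by
    have hsym : (fun t => u (993 / 1000) t) = fun s => u s (993 / 1000) :=
      funext fun t => u_symm _ _
    rw [hsym]
    have hl := u_lower
    obtain ⟨h0, h1⟩ := deriv_u_bounds (a := 993 / 1000) (by norm_num) (u_diag_le_one (by norm_num))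
    -- `|∇u|² = 2 p²` with `p ≤ (1 - u) / 0.014`, and `√2 · 0.0098 / 0.014 < 0.9902`
    rw [Real.sqrt_lt' (by linarith)]
    nlinarith
  have hmem : ((993 / 1000 : ℝ), (993 / 1000 : ℝ)) ∈ Ω1 := by
    constructor <;> constructor <;> norm_num
  refine ⟨⟨19 / 20, by constructor <;> norm_num, ?_⟩, ⟨19 / 20, by constructor <;> norm_num, U_gt⟩,
    ⟨_, hmem, rfl, hcounter⟩, fun h => (h _ hmem).not_gt hcounter⟩
  rw [Ufun_quarter]
  exact U_gt
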